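/- arXiv:2204.05491 — 2 statements merged into one kernel-verified Lean document; each statement's English description precedes it below -/
import Mathlib

section
/- Let n ≥ 3, m ∈ ℝ, and let g = (g_{ij}) be a smooth symmetric-matrix–valued function on {x ∈ ℝⁿ : |x| > 1} of the form g_{ij}(x) = (1 + m/(2|x|^{n-2}))^{4/(n-2)} δ_{ij} + h_{ij}(x), where the error term h satisfies |h(x)| + |x|·|∂h(x)| ≤ C·|x|^{1-n} for some constant C. Then the ADM flux limit exists and equals m: lim_{ρ→∞} (1/(2(n-1)·|S^{n-1}|)) ∫_{{|x|=ρ}} ∑_{i,j} (∂_j g_{ij} - ∂_i g_{jj})(x) · (x_i/ρ) dσ(x) = m, where dσ is the (n-1)-dimensional surface measure on the sphere {|x| = ρ} and |S^{n-1}| is the surface measure of the unit sphere in ℝⁿ. -/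
open MeasureTheory
open scoped BigOperators

/-!
Write `φ` for the conformal factor of the Schwarzschild metric. The flux density of `φ δ` is
`(1 - n) ∂ᵣφ = 2 (n - 1) m r ^ (1 - n) (1 + o(1))`, while that of `h` is bounded by the first
derivatives of `h` and hence is `o(r ^ (1 - n))`. The area of the sphere of radius `r` is
`r ^ (n - 1)` times that of the unit sphere, so the flux converges to `2 (n - 1) m` times the
latter.
-/

open Metric Filter Asymptotics Bornology
open scoped Pointwise Topology RealInnerProductSpace

section HausdorffSphere

lemma hausdorffMeasure_image_lt_top {E F : Type*}
    [NormedAddCommGroup E] [NormedSpace ℝ E] [FiniteDimensional ℝ E] [MeasurableSpace E]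
    [BorelSpace E] [NormedAddCommGroup F] [NormedSpace ℝ F] [MeasurableSpace F] [BorelSpace F]
    {f : E → F} (hf : ContDiff ℝ 1 f) {K : Set E} (hK : IsCompact K) :
    μH[Module.finrank ℝ E] (f '' K) < ⊤ := by
  obtain ⟨L, hL⟩ := hf.locallyLipschitz.locallyLipschitzOn.exists_lipschitzOnWith_of_compact hK
  exact (hL.hausdorffMeasure_image_le (Nat.cast_nonneg _)).trans_lt
    (ENNReal.mul_lt_top (by simp) hK.measure_lt_top)

variable {E : Type*} [NormedAddCommGroup E] [InnerProductSpace ℝ E]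

lemma sphere_inter_inner_nonpos_subset_image_stereoInvFunAux {v : E} (hv : ‖v‖ = 1) :
    sphere (0 : E) 1 ∩ {x | ⟪v, x⟫ ≤ 0} ⊆
      (fun w : (ℝ ∙ v)ᗮ => stereoInvFunAux v w) '' closedBall 0 2 := by
  rintro x ⟨hx, hvx : ⟪v, x⟫ ≤ 0⟩
  have hxv : x ≠ v := by
    rintro rfl
    rw [real_inner_self_eq_norm_sq, hv] at hvx
    linarith
  refine ⟨stereoToFun v x, ?_, congrArg Subtype.val (stereo_left_inv (x := ⟨x, hx⟩) hv hxv)⟩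
  have hscale : 2 / (1 - ⟪v, x⟫) ≤ 2 := div_le_self zero_le_two (by linarith)
  have hproj : ‖(ℝ ∙ v)ᗮ.orthogonalProjectionOnto x‖ ≤ 1 :=
    ((ℝ ∙ v)ᗮ.norm_orthogonalProjectionOnto_apply_le x).trans_eq (mem_sphere_zero_iff_norm.1 hx)
  rw [mem_closedBall_zero_iff, stereoToFun_apply, innerSL_apply_apply, norm_smul,
    Real.norm_of_nonneg (div_nonneg zero_le_two (by linarith))]
  nlinarith [norm_nonneg ((ℝ ∙ v)ᗮ.orthogonalProjectionOnto x)]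

lemma ball_subset_orthogonalProjectionOnto_image_sphere {v : E} (hv : ‖v‖ = 1) :
    ball (0 : (ℝ ∙ v)ᗮ) 1 ⊆ (ℝ ∙ v)ᗮ.orthogonalProjectionOnto '' sphere (0 : E) 1 := by
  intro w hw
  have hw1 : ‖(w : E)‖ ^ 2 ≤ 1 := by
    rw [mem_ball_zero_iff] at hw
    exact pow_le_one₀ (norm_nonneg _) hw.le
  have horth : ⟪(w : E), v⟫ = 0 := Submodule.mem_orthogonal_singleton_iff_inner_left.1 w.2
  refine ⟨w + √(1 - ‖(w : E)‖ ^ 2) • v, ?_, ?_⟩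
  · rw [mem_sphere_zero_iff_norm, ← sq_eq_sq₀ (norm_nonneg _) zero_le_one, norm_add_sq_real,
      real_inner_smul_right, horth, norm_smul, mul_pow, hv, Real.norm_eq_abs, sq_abs,
      Real.sq_sqrt (sub_nonneg.2 hw1)]
    ring
  · simp [Submodule.orthogonalProjectionOnto_orthogonalComplement_singleton_eq_zero]

variable [FiniteDimensional ℝ E]

lemma cast_finrank_orthogonal_span_singleton {v : E} (hv : v ≠ 0) :
    (Module.finrank ℝ (ℝ ∙ v)ᗮ : ℝ) = Module.finrank ℝ E - 1 := by
  have hsum := (ℝ ∙ v).finrank_add_finrank_orthogonal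
  rw [finrank_span_singleton hv] at hsum
  rw [← hsum]
  push_cast
  ring

variable [Nontrivial E] [MeasurableSpace E] [BorelSpace E]

lemma hausdorffMeasure_unit_sphere_lt_top :
    μH[(Module.finrank ℝ E : ℝ) - 1] (sphere (0 : E) 1) < ⊤ := by
  obtain ⟨v, hv⟩ := exists_norm_eq E zero_le_one
  have hemisphere {u : E} (hu : ‖u‖ = 1) :
      μH[(Module.finrank ℝ E : ℝ) - 1] (sphere (0 : E) 1 ∩ {x | ⟪u, x⟫ ≤ 0}) < ⊤ := by
    refine (measure_mono (sphere_inter_inner_nonpos_subset_image_stereoInvFunAux hu)).trans_lt ?_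
    rw [← cast_finrank_orthogonal_span_singleton (norm_ne_zero_iff.1 (hu ▸ one_ne_zero))]
    exact hausdorffMeasure_image_lt_top
      (contDiff_stereoInvFunAux.comp (ℝ ∙ u)ᗮ.subtypeL.contDiff) (isCompact_closedBall 0 2)
  have hcover : sphere (0 : E) 1 ⊆
      sphere (0 : E) 1 ∩ {x | ⟪v, x⟫ ≤ 0} ∪ sphere (0 : E) 1 ∩ {x | ⟪-v, x⟫ ≤ 0} := by
    intro x hx
    rcases le_total ⟪v, x⟫ 0 with hvx | hvx
    · exact .inl ⟨hx, hvx⟩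
    · exact .inr ⟨hx, by simpa [inner_neg_left] using hvx⟩
  exact (measure_mono hcover).trans_lt
    (measure_union_lt_top (hemisphere hv) (hemisphere (by rwa [norm_neg])))

lemma hausdorffMeasure_unit_sphere_pos :
    0 < μH[(Module.finrank ℝ E : ℝ) - 1] (sphere (0 : E) 1) := by
  obtain ⟨v, hv⟩ := exists_norm_eq E zero_le_one
  rw [← cast_finrank_orthogonal_span_singleton (norm_ne_zero_iff.1 (hv ▸ one_ne_zero))]
  calc 0 < μH[Module.finrank ℝ (ℝ ∙ v)ᗮ] (ball (0 : (ℝ ∙ v)ᗮ) 1) := measure_ball_pos _ _ one_pos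
    _ ≤ μH[Module.finrank ℝ (ℝ ∙ v)ᗮ] ((ℝ ∙ v)ᗮ.orthogonalProjectionOnto '' sphere (0 : E) 1) :=
      measure_mono (ball_subset_orthogonalProjectionOnto_image_sphere hv)
    _ ≤ μH[Module.finrank ℝ (ℝ ∙ v)ᗮ] (sphere (0 : E) 1) :=
      hausdorffMeasure_orthogonalProjectionOnto_le _ _ _ (Nat.cast_nonneg _)

end HausdorffSphere

section SphereIntegral

variable {E F : Type*} [NormedAddCommGroup E] [NormedSpace ℝ E] [MeasurableSpace E] [BorelSpace E]
  [NormedAddCommGroup F] [NormedSpace ℝ F] [CompleteSpace F] {d : ℝ}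

lemma hausdorffMeasure_sphere (hd : 0 ≤ d) {ρ : ℝ} (hρ : 0 < ρ) :
    μH[d] (sphere (0 : E) ρ) = ENNReal.ofReal (ρ ^ d) * μH[d] (sphere (0 : E) 1) := by
  have hsphere : sphere (0 : E) ρ = ρ • sphere (0 : E) 1 := by
    rw [smul_sphere' hρ.ne', smul_zero, Real.norm_of_nonneg hρ.le, mul_one]
  rw [hsphere, Measure.hausdorffMeasure_smul₀ hd hρ.ne', ENNReal.smul_def, smul_eq_mul,
    ENNReal.coe_rpow_of_nonneg _ hd, ← enorm_eq_nnnorm, Real.enorm_of_nonneg hρ.le,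
    ENNReal.ofReal_rpow_of_pos hρ]

lemma norm_setIntegral_sphere_sub_le (hd : 0 ≤ d) (hfin : μH[d] (sphere (0 : E) 1) ≠ ⊤)
    {f : E → F} (hf : AEStronglyMeasurable f μH[d]) {c : F} {ε ρ : ℝ} (hρ : 0 < ρ)
    (hbound : ∀ x ∈ sphere (0 : E) ρ, ‖ρ ^ d • f x - c‖ ≤ ε) :
    ‖∫ x in sphere (0 : E) ρ, f x ∂μH[d] - μH[d].real (sphere (0 : E) 1) • c‖ ≤
      ε * μH[d].real (sphere (0 : E) 1) := by
  have hρd : 0 < ρ ^ d := Real.rpow_pos_of_pos hρ d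
  have hreal : μH[d].real (sphere (0 : E) ρ) = ρ ^ d * μH[d].real (sphere (0 : E) 1) := by
    rw [Measure.real, hausdorffMeasure_sphere hd hρ, ENNReal.toReal_mul,
      ENNReal.toReal_ofReal hρd.le, Measure.real]
  have hfinρ : μH[d] (sphere (0 : E) ρ) < ⊤ := by
    rw [hausdorffMeasure_sphere hd hρ]
    exact ENNReal.mul_lt_top ENNReal.ofReal_lt_top hfin.lt_top
  have hint : IntegrableOn (fun x => ρ ^ d • f x) (sphere (0 : E) ρ) μH[d] := by
    refine .of_bound hfinρ (hf.const_smul _).restrict (ε + ‖c‖) ?_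
    refine ae_restrict_of_forall_mem isClosed_sphere.measurableSet fun x hx => ?_
    linarith [hbound x hx, norm_le_norm_sub_add (ρ ^ d • f x) c]
  have hle := norm_setIntegral_le_of_norm_le_const hfinρ hbound
  rw [integral_sub hint (integrableOn_const hfinρ.ne), integral_smul, setIntegral_const, hreal,
    mul_smul, ← smul_sub, norm_smul, Real.norm_of_nonneg hρd.le, mul_left_comm] at hle
  exact le_of_mul_le_mul_left hle hρd

lemma tendsto_setIntegral_sphere (hd : 0 ≤ d) (hfin : μH[d] (sphere (0 : E) 1) ≠ ⊤)
    {f : E → F} (hf : AEStronglyMeasurable f μH[d]) {c : F}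
    (hlim : Tendsto (fun x => ‖x‖ ^ d • f x) (cobounded E) (𝓝 c)) :
    Tendsto (fun ρ => ∫ x in sphere (0 : E) ρ, f x ∂μH[d]) atTop
      (𝓝 (μH[d].real (sphere (0 : E) 1) • c)) := by
  rw [Metric.tendsto_nhds]
  intro ε hε
  set S := μH[d].real (sphere (0 : E) 1)
  have : 0 ≤ S := measureReal_nonneg
  have hnear : ∀ᶠ x in cobounded E, dist (‖x‖ ^ d • f x) c < ε / (S + 1) :=
    Metric.tendsto_nhds.1 hlim _ (by positivity)
  rw [← comap_norm_atTop, eventually_comap] at hnear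
  filter_upwards [hnear, eventually_gt_atTop 0] with ρ hball hρ
  calc dist (∫ x in sphere (0 : E) ρ, f x ∂μH[d]) (S • c)
      ≤ ε / (S + 1) * S := by
        rw [dist_eq_norm]
        refine norm_setIntegral_sphere_sub_le hd hfin hf hρ fun x hx => ?_
        have hxρ := mem_sphere_zero_iff_norm.1 hx
        rw [← dist_eq_norm, ← hxρ]
        exact (hball x hxρ).le
    _ < ε := by
        rw [div_mul_eq_mul_div, div_lt_iff₀ (by positivity)]
        linarith

end SphereIntegral

section FluxDensity

variable {n : ℕ}

/-- The integrand `∑ᵢⱼ (∂ⱼgᵢⱼ - ∂ᵢgⱼⱼ) xᵢ / |x|` of the ADM flux integral, as a function on `ℝⁿ`.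
The unit normal is normalised by `‖x‖` instead of the radius of a given sphere. -/
noncomputable def admFluxDensity (g : EuclideanSpace ℝ (Fin n) → Fin n → Fin n → ℝ)
    (x : EuclideanSpace ℝ (Fin n)) : ℝ :=
  ∑ i : Fin n, ∑ j : Fin n,
    (fderiv ℝ (fun y => g y i j) x (EuclideanSpace.single j 1)
      - fderiv ℝ (fun y => g y j j) x (EuclideanSpace.single i 1)) * (x i / ‖x‖)

/-- The normalised ADM flux of `g` through the coordinate sphere of radius `ρ`, whose limit as
`ρ → ∞` is the ADM mass. -/
noncomputable def admFlux (g : EuclideanSpace ℝ (Fin n) → Fin n → Fin n → ℝ) (ρ : ℝ) : ℝ :=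
  (1 / (2 * ((n : ℝ) - 1) *
      (μH[(n : ℝ) - 1] (sphere (0 : EuclideanSpace ℝ (Fin n)) 1)).toReal)) *
    ∫ x in sphere (0 : EuclideanSpace ℝ (Fin n)) ρ,
      (∑ i : Fin n, ∑ j : Fin n,
        (fderiv ℝ (fun y => g y i j) x (EuclideanSpace.single j 1)
          - fderiv ℝ (fun y => g y j j) x (EuclideanSpace.single i 1)) * (x i / ρ))
      ∂(μH[(n : ℝ) - 1])

variable {g p q : EuclideanSpace ℝ (Fin n) → Fin n → Fin n → ℝ} {x : EuclideanSpace ℝ (Fin n)}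

lemma admFlux_eq_setIntegral_admFluxDensity (ρ : ℝ) :
    admFlux g ρ = 1 / (2 * ((n : ℝ) - 1) *
        μH[(n : ℝ) - 1].real (sphere (0 : EuclideanSpace ℝ (Fin n)) 1)) *
      ∫ x in sphere (0 : EuclideanSpace ℝ (Fin n)) ρ, admFluxDensity g x ∂μH[(n : ℝ) - 1] := by
  unfold admFlux Measure.real
  congr 1
  refine setIntegral_congr_fun isClosed_sphere.measurableSet fun x hx => ?_
  simp only [admFluxDensity, mem_sphere_zero_iff_norm.1 hx]

lemma measurable_admFluxDensity : Measurable (admFluxDensity g) := by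
  refine Finset.measurable_fun_sum _ fun i _ => Finset.measurable_fun_sum _ fun j _ => ?_
  have hcoord : Measurable fun x : EuclideanSpace ℝ (Fin n) => x i / ‖x‖ := by fun_prop
  exact ((measurable_fderiv_apply_const ℝ _ _).sub (measurable_fderiv_apply_const ℝ _ _)).mul hcoord

lemma tendsto_admFlux (hn : 2 ≤ n) {c : ℝ}
    (hlim : Tendsto (fun x => ‖x‖ ^ ((n : ℝ) - 1) * admFluxDensity g x) (cobounded _) (𝓝 c)) :
    Tendsto (admFlux g) atTop (𝓝 (c / (2 * ((n : ℝ) - 1)))) := by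
  have hn' : (2 : ℝ) ≤ n := mod_cast hn
  have : Nontrivial (EuclideanSpace ℝ (Fin n)) := by
    have : Nonempty (Fin n) := ⟨⟨0, by omega⟩⟩
    infer_instance
  have hfin := hausdorffMeasure_unit_sphere_lt_top (E := EuclideanSpace ℝ (Fin n))
  have hpos := hausdorffMeasure_unit_sphere_pos (E := EuclideanSpace ℝ (Fin n))
  rw [finrank_euclideanSpace_fin] at hfin hpos
  have hS : 0 < μH[(n : ℝ) - 1].real (sphere (0 : EuclideanSpace ℝ (Fin n)) 1) :=
    ENNReal.toReal_pos hpos.ne' hfin.ne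
  have hflux := (tendsto_setIntegral_sphere (by linarith) hfin.ne
    measurable_admFluxDensity.aestronglyMeasurable hlim).const_mul
      (1 / (2 * ((n : ℝ) - 1) * μH[(n : ℝ) - 1].real (sphere (0 : EuclideanSpace ℝ (Fin n)) 1)))
  rw [funext admFlux_eq_setIntegral_admFluxDensity]
  convert hflux using 2
  rw [smul_eq_mul]
  field_simp

lemma admFluxDensity_eq_add (hp : ∀ i j, DifferentiableAt ℝ (fun y => p y i j) x)
    (hq : ∀ i j, DifferentiableAt ℝ (fun y => q y i j) x)
    (hg : ∀ i j, (fun y => g y i j) =ᶠ[𝓝 x] fun y => p y i j + q y i j) :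
    admFluxDensity g x = admFluxDensity p x + admFluxDensity q x := by
  have hfderiv (i j : Fin n) : fderiv ℝ (fun y => g y i j) x =
      fderiv ℝ (fun y => p y i j) x + fderiv ℝ (fun y => q y i j) x := by
    rw [(hg i j).fderiv_eq, fderiv_fun_add (hp i j) (hq i j)]
  simp only [admFluxDensity, hfderiv, add_apply, ← Finset.sum_add_distrib]
  refine Finset.sum_congr rfl fun i _ => Finset.sum_congr rfl fun j _ => ?_
  ring

lemma norm_admFluxDensity_le :
    ‖admFluxDensity g x‖ ≤
      ∑ i, ∑ j, (‖fderiv ℝ (fun y => g y i j) x‖ + ‖fderiv ℝ (fun y => g y j j) x‖) := by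
  have hpartial (i j k : Fin n) : |fderiv ℝ (fun y => g y i j) x (EuclideanSpace.single k 1)| ≤
      ‖fderiv ℝ (fun y => g y i j) x‖ := by
    simpa using (fderiv ℝ (fun y => g y i j) x).le_opNorm (EuclideanSpace.single k 1)
  refine norm_sum_le_of_le _ fun i _ => norm_sum_le_of_le _ fun j _ => ?_
  have hnormal : |x i / ‖x‖| ≤ 1 := by
    rw [abs_div, abs_norm]
    exact div_le_one_of_le₀ (PiLp.norm_apply_le x i) (norm_nonneg x)
  rw [Real.norm_eq_abs, abs_mul]
  exact (mul_le_of_le_one_right (abs_nonneg _) hnormal).trans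
    ((abs_sub _ _).trans (add_le_add (hpartial i j j) (hpartial j j i)))

lemma isLittleO_admFluxDensity {l : Filter (EuclideanSpace ℝ (Fin n))}
    {u : EuclideanSpace ℝ (Fin n) → ℝ}
    (hg : ∀ i j, (fun x => fderiv ℝ (fun y => g y i j) x) =o[l] u) :
    admFluxDensity g =o[l] u := by
  refine (IsBigO.of_norm_le fun x => norm_admFluxDensity_le).trans_isLittleO ?_
  exact .fun_sum fun i _ => .fun_sum fun j _ => (hg i j).norm_left.add (hg j j).norm_left

lemma admFluxDensity_conformallyFlat (φ : EuclideanSpace ℝ (Fin n) → ℝ) :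
    admFluxDensity (fun y i j => φ y * if i = j then 1 else 0) x =
      (1 - n) * (fderiv ℝ φ x x / ‖x‖) := by
  have hexpand : ∑ i, fderiv ℝ φ x (EuclideanSpace.single i 1) * x i = fderiv ℝ φ x x := by
    conv_rhs => enter [2]; rw [← (EuclideanSpace.basisFun (Fin n) ℝ).sum_repr x]
    simp [mul_comm]
  have hentry (i j : Fin n) (v : EuclideanSpace ℝ (Fin n)) :
      fderiv ℝ (fun y => φ y * if i = j then (1 : ℝ) else 0) x v =
        if i = j then fderiv ℝ φ x v else 0 := by
    split_ifs <;> simp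
  have hrow (i : Fin n) : ∑ j, ((if i = j then fderiv ℝ φ x (EuclideanSpace.single j 1) else 0)
      - fderiv ℝ φ x (EuclideanSpace.single i 1)) * (x i / ‖x‖) =
        (1 - n) / ‖x‖ * (fderiv ℝ φ x (EuclideanSpace.single i 1) * x i) := by
    rw [← Finset.sum_mul, Finset.sum_sub_distrib]
    simp only [Finset.sum_ite_eq, Finset.mem_univ, if_true, Finset.sum_const, Finset.card_univ,
      Fintype.card_fin, nsmul_eq_mul]
    ring
  simp only [admFluxDensity, hentry, if_true, mul_one, hrow]
  rw [← Finset.mul_sum, hexpand]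
  ring

end FluxDensity

section Radial

variable {E : Type*} [NormedAddCommGroup E] [InnerProductSpace ℝ E]

lemma fderiv_comp_norm_apply_self {ψ : ℝ → ℝ} {x : E} (hx : x ≠ 0)
    (hψ : DifferentiableAt ℝ ψ ‖x‖) :
    fderiv ℝ (fun y => ψ ‖y‖) x x = deriv ψ ‖x‖ * ‖x‖ := by
  have hnorm : DifferentiableAt ℝ (fun y : E => ‖y‖) x := differentiableAt_id.norm ℝ hx
  have hcomp := (hψ.hasDerivAt.comp_hasFDerivAt x hnorm.hasFDerivAt).fderiv
  rw [Function.comp_def] at hcomp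
  rw [hcomp, smul_apply, hnorm.fderiv_norm_self, smul_eq_mul]

end Radial

section Schwarzschild

/-- The conformal factor `(1 + m / (2 r^(d - 2)))^(4 / (d - 2))` of the Schwarzschild metric of
mass `m` in dimension `d`, as a function of the radius `r`. -/
noncomputable def schwarzschildFactor (d m r : ℝ) : ℝ :=
  (1 + m / (2 * r ^ (d - 2))) ^ (4 / (d - 2))

variable {d : ℝ}

lemma hasDerivAt_schwarzschildFactor {m r : ℝ} (hd : d ≠ 2) (hr : 0 < r)
    (hbase : 1 + m / (2 * r ^ (d - 2)) ≠ 0) :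
    HasDerivAt (schwarzschildFactor d m)
      (-2 * m * r ^ (1 - d) * (1 + m / (2 * r ^ (d - 2))) ^ (4 / (d - 2) - 1)) r := by
  have hd2 : d - 2 ≠ 0 := sub_ne_zero.2 hd
  have hpow : HasDerivAt (fun r : ℝ => r ^ (d - 2)) ((d - 2) * r ^ (d - 2 - 1)) r :=
    Real.hasDerivAt_rpow_const (.inl hr.ne')
  have hderiv := (((hasDerivAt_const r m).div (hpow.const_mul 2) (by positivity)).const_add
    1).rpow_const (p := 4 / (d - 2)) (.inl hbase)
  refine hderiv.congr_deriv ?_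
  have hexp : r ^ (1 - d) = (r ^ (d - 2))⁻¹ / r := by
    rw [← Real.rpow_neg hr.le, ← Real.rpow_sub_one hr.ne']
    ring_nf
  simp only [Real.rpow_sub_one hr.ne', hexp, Pi.div_apply]
  field_simp
  ring

variable (m : ℝ)

lemma tendsto_schwarzschildFactor_base (hd : 2 < d) :
    Tendsto (fun r : ℝ => 1 + m / (2 * r ^ (d - 2))) atTop (𝓝 1) := by
  have hpow := (tendsto_rpow_atTop (sub_pos.2 hd)).const_mul_atTop (two_pos (α := ℝ))
  simpa using (hpow.const_div_atTop m).const_add 1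

lemma eventually_hasDerivAt_schwarzschildFactor (hd : 2 < d) :
    ∀ᶠ r in atTop, HasDerivAt (schwarzschildFactor d m)
      (-2 * m * r ^ (1 - d) * (1 + m / (2 * r ^ (d - 2))) ^ (4 / (d - 2) - 1)) r := by
  filter_upwards [eventually_gt_atTop 0,
    (tendsto_schwarzschildFactor_base m hd).eventually_ne one_ne_zero] with r hr hbase
  exact hasDerivAt_schwarzschildFactor hd.ne' hr hbase

lemma tendsto_rpow_mul_deriv_schwarzschildFactor (hd : 2 < d) :
    Tendsto (fun r => r ^ (d - 1) * deriv (schwarzschildFactor d m) r) atTop (𝓝 (-2 * m)) := by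
  have hlim := ((tendsto_schwarzschildFactor_base m hd).rpow_const (p := 4 / (d - 2) - 1)
    (.inl one_ne_zero)).const_mul (-2 * m)
  rw [Real.one_rpow, mul_one] at hlim
  refine hlim.congr' ?_
  filter_upwards [eventually_gt_atTop 0, eventually_hasDerivAt_schwarzschildFactor m hd]
    with r hr hderiv
  have hcancel : r ^ (d - 1) * r ^ (1 - d) = 1 := by
    rw [← Real.rpow_add hr, sub_add_sub_cancel, sub_self, Real.rpow_zero]
  rw [hderiv.deriv]
  linear_combination (2 * m * (1 + m / (2 * r ^ (d - 2))) ^ (4 / (d - 2) - 1)) * hcancel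

variable {n : ℕ}

/-- The components of the Schwarzschild metric of mass `m` in isotropic coordinates on `ℝⁿ`. -/
noncomputable def schwarzschildMetric (x : EuclideanSpace ℝ (Fin n)) (i j : Fin n) : ℝ :=
  schwarzschildFactor n m ‖x‖ * if i = j then 1 else 0

lemma eventually_differentiableAt_schwarzschildMetric (hn : 2 < n) :
    ∀ᶠ x in cobounded (EuclideanSpace ℝ (Fin n)), ∀ i j,
      DifferentiableAt ℝ (fun y => schwarzschildMetric m y i j) x := by
  filter_upwards [eventually_ne_cobounded 0, tendsto_norm_cobounded_atTop.eventually
    (eventually_hasDerivAt_schwarzschildFactor m (d := n) (mod_cast hn))] with x hx hderiv i j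
  exact (hderiv.differentiableAt.comp x (differentiableAt_id.norm ℝ hx)).mul_const _

lemma tendsto_rpow_mul_admFluxDensity_schwarzschildMetric (hn : 2 < n) :
    Tendsto (fun x : EuclideanSpace ℝ (Fin n) =>
        ‖x‖ ^ ((n : ℝ) - 1) * admFluxDensity (schwarzschildMetric m) x)
      (cobounded _) (𝓝 (2 * ((n : ℝ) - 1) * m)) := by
  have hn' : (2 : ℝ) < n := mod_cast hn
  have hlim := ((tendsto_rpow_mul_deriv_schwarzschildFactor m hn').comp
    (tendsto_norm_cobounded_atTop (E := EuclideanSpace ℝ (Fin n)))).const_mul (1 - n : ℝ)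
  rw [show (1 - n : ℝ) * (-2 * m) = 2 * (n - 1) * m by ring] at hlim
  refine hlim.congr' ?_
  filter_upwards [eventually_ne_cobounded 0, tendsto_norm_cobounded_atTop.eventually
    (eventually_hasDerivAt_schwarzschildFactor m hn')] with x hx hderiv
  have hdensity : admFluxDensity (schwarzschildMetric m) x =
      (1 - n) * deriv (schwarzschildFactor n m) ‖x‖ := by
    refine (admFluxDensity_conformallyFlat _).trans ?_
    rw [fderiv_comp_norm_apply_self hx hderiv.differentiableAt,
      mul_div_cancel_right₀ _ (norm_ne_zero_iff.2 hx)]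
  rw [hdensity, Function.comp_apply, mul_left_comm]

end Schwarzschild

lemma isLittleO_cobounded_of_norm_mul_norm_isBigO {E F : Type*} [NormedAddCommGroup E]
    [NormedAddCommGroup F] {f : E → F} {u : E → ℝ}
    (hf : (fun x => ‖x‖ * ‖f x‖) =O[cobounded E] u) : f =o[cobounded E] u := by
  have hinv : (fun x : E => ‖x‖⁻¹) =o[cobounded E] fun _ => (1 : ℝ) :=
    (isLittleO_one_iff ℝ).2 tendsto_norm_cobounded_atTop.inv_tendsto_atTop
  refine ((hinv.mul_isBigO hf).congr' ?_ (.of_eq (funext fun x => one_mul _))).of_norm_left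
  filter_upwards [eventually_ne_cobounded 0] with x hx
  exact inv_mul_cancel_left₀ (norm_ne_zero_iff.2 hx) _

lemma isLittleO_fderiv_of_abs_add_norm_mul_norm_fderiv_le {E : Type*} [NormedAddCommGroup E]
    [NormedSpace ℝ E] {f : E → ℝ} {R C s : ℝ}
    (hf : ∀ x, R < ‖x‖ → |f x| + ‖x‖ * ‖fderiv ℝ f x‖ ≤ C * ‖x‖ ^ s) :
    fderiv ℝ f =o[cobounded E] fun x => ‖x‖ ^ s := by
  refine isLittleO_cobounded_of_norm_mul_norm_isBigO (.of_bound C ?_)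
  filter_upwards [tendsto_norm_cobounded_atTop.eventually_gt_atTop R] with x hx
  rw [Real.norm_of_nonneg (by positivity), Real.norm_of_nonneg (by positivity)]
  linarith [hf x hx, abs_nonneg (f x)]

lemma admFluxDensity_eventuallyEq_add {n : ℕ} {m R : ℝ}
    {g h : EuclideanSpace ℝ (Fin n) → Fin n → Fin n → ℝ} (hn : 2 < n)
    (hg : ∀ i j, DifferentiableOn ℝ (fun x => g x i j) {x | R < ‖x‖})
    (hdef : ∀ x, R < ‖x‖ → ∀ i j, g x i j = schwarzschildMetric m x i j + h x i j) :
    admFluxDensity g =ᶠ[cobounded _]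
      admFluxDensity (schwarzschildMetric m) + admFluxDensity h := by
  filter_upwards [eventually_differentiableAt_schwarzschildMetric m hn,
    tendsto_norm_cobounded_atTop.eventually_gt_atTop R] with x hS hx
  have hnhds : {y : EuclideanSpace ℝ (Fin n) | R < ‖y‖} ∈ 𝓝 x :=
    (isOpen_lt continuous_const continuous_norm).mem_nhds hx
  have hsum (i j : Fin n) : (fun y => g y i j) =ᶠ[𝓝 x]
      fun y => schwarzschildMetric m y i j + h y i j := by
    filter_upwards [hnhds] with y hy using hdef y hy i j
  refine admFluxDensity_eq_add hS (fun i j => ?_) hsum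
  refine (((hg i j).differentiableAt hnhds).sub (hS i j)).congr_of_eventuallyEq ?_
  filter_upwards [hsum i j] with y hy
  simp [hy]

theorem adm_mass_of_asymptotically_schwarzschild_general {n : ℕ} (hn : 3 ≤ n) {m R : ℝ}
    {g h : EuclideanSpace ℝ (Fin n) → Fin n → Fin n → ℝ}
    (hg : ∀ i j, DifferentiableOn ℝ (fun x => g x i j) {x | R < ‖x‖})
    (hdef : ∀ x, R < ‖x‖ → ∀ i j, g x i j = schwarzschildMetric m x i j + h x i j)
    (hdecay : ∀ i j, (fun x => fderiv ℝ (fun y => h y i j) x) =o[cobounded _]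
      fun x => ‖x‖ ^ (1 - (n : ℝ))) :
    Tendsto (admFlux g) atTop (𝓝 m) := by
  have hn1 : (n : ℝ) - 1 ≠ 0 := by
    have : (3 : ℝ) ≤ n := mod_cast hn
    linarith
  have herror : Tendsto (fun x => ‖x‖ ^ ((n : ℝ) - 1) * admFluxDensity h x)
      (cobounded _) (𝓝 0) := by
    refine (isLittleO_admFluxDensity hdecay).tendsto_div_nhds_zero.congr fun x => ?_
    rw [← neg_sub (n : ℝ) 1, Real.rpow_neg (norm_nonneg x), div_inv_eq_mul, mul_comm]
  have hdensity : Tendsto (fun x => ‖x‖ ^ ((n : ℝ) - 1) * admFluxDensity g x)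
      (cobounded _) (𝓝 (2 * ((n : ℝ) - 1) * m)) := by
    have hsum := (tendsto_rpow_mul_admFluxDensity_schwarzschildMetric m hn).add herror
    rw [add_zero] at hsum
    refine hsum.congr' ?_
    filter_upwards [admFluxDensity_eventuallyEq_add hn hg hdef] with x hx
    rw [hx, Pi.add_apply, mul_add]
  simpa [mul_div_assoc, hn1] using tendsto_admFlux (by omega) hdensity

/-- For `n ≥ 3` and a smooth symmetric-matrix-valued metric
`gᵢⱼ(x) = (1 + m/(2|x|^{n-2}))^{4/(n-2)} δᵢⱼ + hᵢⱼ(x)` on `{|x| > 1}` with error bound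
`|h| + |x||∂h| ≤ C|x|^{1-n}`, the ADM flux limit exists and equals `m`:
`lim_{ρ→∞} (1/(2(n-1)|S^{n-1}|)) ∫_{|x|=ρ} ∑ᵢⱼ (∂ⱼgᵢⱼ - ∂ᵢgⱼⱼ)(x)·(xᵢ/ρ) dσ = m`. -/
theorem adm_mass_of_asymptotically_schwarzschild {n : ℕ} (hn : 3 ≤ n) (m : ℝ)
    (g h : EuclideanSpace ℝ (Fin n) → Fin n → Fin n → ℝ) (C : ℝ)
    (hsmooth : ∀ i j, ContDiffOn ℝ (⊤ : ℕ∞) (fun x => g x i j)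
      {x : EuclideanSpace ℝ (Fin n) | 1 < ‖x‖})
    (hsymm : ∀ x : EuclideanSpace ℝ (Fin n), 1 < ‖x‖ → ∀ i j, g x i j = g x j i)
    (hdef : ∀ x : EuclideanSpace ℝ (Fin n), 1 < ‖x‖ → ∀ i j,
      g x i j = (1 + m / (2 * ‖x‖ ^ ((n : ℝ) - 2))) ^ ((4 : ℝ) / ((n : ℝ) - 2))
          * (if i = j then 1 else 0) + h x i j)
    (hdecay : ∀ x : EuclideanSpace ℝ (Fin n), 1 < ‖x‖ → ∀ i j,
      |h x i j| + ‖x‖ * ‖fderiv ℝ (fun y => h y i j) x‖ ≤ C * ‖x‖ ^ ((1 : ℝ) - n)) :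
    Filter.Tendsto (fun ρ : ℝ =>
      (1 / (2 * ((n : ℝ) - 1) *
          (μH[(n : ℝ) - 1] (Metric.sphere (0 : EuclideanSpace ℝ (Fin n)) 1)).toReal)) *
        ∫ x in Metric.sphere (0 : EuclideanSpace ℝ (Fin n)) ρ,
          (∑ i : Fin n, ∑ j : Fin n,
            (fderiv ℝ (fun y => g y i j) x (EuclideanSpace.single j 1)
              - fderiv ℝ (fun y => g y j j) x (EuclideanSpace.single i 1)) * (x i / ρ))
          ∂(μH[(n : ℝ) - 1]))
      Filter.atTop (nhds m) := by
  exact adm_mass_of_asymptotically_schwarzschild_general hn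
    (fun i j => (hsmooth i j).differentiableOn (by simp)) hdef
    fun i j => isLittleO_fderiv_of_abs_add_norm_mul_norm_fderiv_le fun x hx => hdecay x hx i j
end

section
/- Let n ≥ 3 and let u be a bounded harmonic function on the exterior domain {x ∈ ℝⁿ : |x| > 1} such that u(x) → 0 as |x| → ∞. Then there exist a constant A ∈ ℝ and a constant C > 0 such that |u(x) - A·|x|^{2-n}| ≤ C·|x|^{1-n} for all |x| ≥ 2. -/
open scoped BigOperators

/-- The Euclidean Laplacian `Δu = ∑ i, ∂²u/∂xᵢ²` of a function on `ℝⁿ`. -/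
noncomputable def euclideanLaplacian {n : ℕ} (u : EuclideanSpace ℝ (Fin n) → ℝ)
    (x : EuclideanSpace ℝ (Fin n)) : ℝ :=
  ∑ i : Fin n,
    fderiv ℝ (fun y => fderiv ℝ u y (EuclideanSpace.single i 1)) x
      (EuclideanSpace.single i 1)

/-!
Let `w` be `C²` and vanish at infinity, with `Δ w` compactly supported. By Green's identity, the
derivative in `t` of a smooth radial mean of `w` over the ball of radius `t` about `x` is a radial
average of `Δ w` over the same ball. The mean runs from a multiple of `w x` at `t = 0` to `0` at
`t = ∞`; integrating in `t` and exchanging the integrals, scaling turns the kernel into a constant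
multiple of `‖y - x‖ ^ (2 - d)`, so that `w` is a multiple of the Newtonian potential of `Δ w`.
Smooth radial weights, in place of sphere means, avoid surface measure.

Cutting `u` off near the origin yields such a `w`, equal to `u` far out, and the expansion of `u`
is the expansion of the kernel `‖y - x‖ ^ (2 - d)` for `y` bounded and `x` large.
-/

open Asymptotics Filter Topology Set MeasureTheory Module
open scoped Laplacian Gradient

section Laplacian

variable {E F : Type*} [NormedAddCommGroup E] [InnerProductSpace ℝ E] [FiniteDimensional ℝ E]
  [NormedAddCommGroup F] [NormedSpace ℝ F]

theorem laplacian_eq_sum_fderiv_fderiv {ι : Type*} [Fintype ι] (b : OrthonormalBasis ι ℝ E)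
    {g : E → F} {y : E} (hg : ContDiffAt ℝ 2 g y) :
    Δ g y = ∑ i, fderiv ℝ (fun z ↦ fderiv ℝ g z (b i)) y (b i) := by
  have hg' : DifferentiableAt ℝ (fderiv ℝ g) y :=
    (hg.fderiv_right (m := 1) (by norm_num)).differentiableAt one_ne_zero
  rw [InnerProductSpace.laplacian_eq_iteratedFDeriv_orthonormalBasis g b]
  refine Finset.sum_congr rfl fun i _ ↦ ?_
  rw [iteratedFDeriv_two_apply, fderiv_clm_apply hg' (differentiableAt_const _)]
  simp

theorem continuous_laplacian {g : E → F} (hg : ContDiff ℝ 2 g) : Continuous (Δ g) := by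
  rw [InnerProductSpace.laplacian_eq_iteratedFDeriv_stdOrthonormalBasis]
  have := hg.continuous_iteratedFDeriv (m := 2) (by norm_num)
  fun_prop

theorem harmonicOnNhd_of_euclideanLaplacian_eq_zero {n : ℕ} {u : EuclideanSpace ℝ (Fin n) → ℝ}
    {U : Set (EuclideanSpace ℝ (Fin n))} (hU : IsOpen U) (hu : ContDiffOn ℝ 2 u U)
    (hharm : ∀ x ∈ U, euclideanLaplacian u x = 0) : InnerProductSpace.HarmonicOnNhd u U := by
  have hu' {x} (hx : x ∈ U) : ContDiffAt ℝ 2 u x := hu.contDiffAt (hU.mem_nhds hx)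
  refine fun x hx ↦ ⟨hu' hx, ?_⟩
  filter_upwards [hU.mem_nhds hx] with y hy
  rw [laplacian_eq_sum_fderiv_fderiv (EuclideanSpace.basisFun (Fin n) ℝ) (hu' hy)]
  simpa [euclideanLaplacian] using hharm y hy

variable [MeasurableSpace E] [BorelSpace E]

theorem integral_fderiv_gradient_eq_neg_integral_smul_laplacian {φ : E → ℝ} {g : E → F}
    (hφ : ContDiff ℝ 1 φ) (hφc : HasCompactSupport φ) (hg : ContDiff ℝ 2 g) :
    ∫ y, fderiv ℝ g y (∇ φ y) = -∫ y, φ y • Δ g y := by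
  let b := stdOrthonormalBasis ℝ E
  have hg' : ContDiff ℝ 1 (fderiv ℝ g) := hg.fderiv_right (by norm_num)
  have hgb (i) : ContDiff ℝ 1 fun y ↦ fderiv ℝ g y (b i) := hg'.clm_apply contDiff_const
  have hgb' (i) : Continuous fun y ↦ fderiv ℝ (fun z ↦ fderiv ℝ g z (b i)) y (b i) :=
    ((hgb i).continuous_fderiv one_ne_zero).clm_apply continuous_const
  have hφ' (i) : Continuous fun y ↦ fderiv ℝ φ y (b i) :=
    (hφ.continuous_fderiv one_ne_zero).clm_apply continuous_const
  have int₁ (i) : Integrable fun y ↦ fderiv ℝ φ y (b i) • fderiv ℝ g y (b i) :=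
    ((hφ' i).smul (hgb i).continuous).integrable_of_hasCompactSupport
      (hφc.fderiv_apply (𝕜 := ℝ) (b i)).smul_right
  have int₂ (i) : Integrable fun y ↦ φ y • fderiv ℝ (fun z ↦ fderiv ℝ g z (b i)) y (b i) :=
    (hφ.continuous.smul (hgb' i)).integrable_of_hasCompactSupport hφc.smul_right
  have int₃ (i) : Integrable fun y ↦ φ y • fderiv ℝ g y (b i) :=
    (hφ.continuous.smul (hgb i).continuous).integrable_of_hasCompactSupport hφc.smul_right
  have expand_gradient (y : E) :
      fderiv ℝ g y (∇ φ y) = ∑ i, fderiv ℝ φ y (b i) • fderiv ℝ g y (b i) := by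
    conv_lhs => rw [← b.sum_repr' (∇ φ y)]
    simp [inner_gradient_right]
  have expand_laplacian (y : E) :
      φ y • Δ g y = ∑ i, φ y • fderiv ℝ (fun z ↦ fderiv ℝ g z (b i)) y (b i) := by
    rw [laplacian_eq_sum_fderiv_fderiv b hg.contDiffAt, Finset.smul_sum]
  simp_rw [expand_gradient, expand_laplacian]
  rw [integral_finsetSum _ fun i _ ↦ int₁ i, integral_finsetSum _ fun i _ ↦ int₂ i,
    ← Finset.sum_neg_distrib]
  refine Finset.sum_congr rfl fun i _ ↦ ?_
  rw [integral_smul_fderiv_eq_neg_fderiv_smul_of_integrable (int₁ i) (int₂ i) (int₃ i)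
    (fun y _ ↦ (hφ.differentiable one_ne_zero) y)
    (fun y _ ↦ ((hgb i).differentiable one_ne_zero) y), neg_neg]

end Laplacian

section RadialMean

variable {E F : Type*} [NormedAddCommGroup E] [InnerProductSpace ℝ E]
  [NormedAddCommGroup F] [NormedSpace ℝ F] {θ ψ : ℝ → ℝ} {w : E → F}

theorem deriv_eq_zero_of_forall_ge {f : ℝ → F} {a s : ℝ} (hf : DifferentiableAt ℝ f s)
    (hfa : ∀ r, a ≤ r → f r = 0) (hs : a ≤ s) : deriv f s = 0 := by
  rw [← hf.derivWithin (uniqueDiffOn_Ici a s hs),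
    derivWithin_congr (s := Ici a) (f := fun _ ↦ 0) hfa (hfa s hs)]
  simp

theorem gradient_comp_norm_sub_div_sq [CompleteSpace E] (hψ : Differentiable ℝ ψ) (x : E) (t : ℝ)
    (y : E) : ∇ (fun y ↦ ψ ((‖y - x‖ / t) ^ 2)) y =
      (2 * deriv ψ ((‖y - x‖ / t) ^ 2) / t ^ 2) • (y - x) := by
  have h_sq : HasFDerivAt (fun y : E ↦ (‖y - x‖ / t) ^ 2) ((2 / t ^ 2) • innerSL ℝ (y - x)) y := by
    have := ((hasFDerivAt_id y).sub_const x).norm_sq.const_mul (t ^ 2)⁻¹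
    refine (this.congr_fderiv ?_).congr_of_eventuallyEq (.of_forall fun z ↦ ?_)
    · ext v
      simp only [id_eq, map_sub, ContinuousLinearMap.comp_id, smul_apply, sub_apply,
        coe_innerSL_apply, nsmul_eq_mul, Nat.cast_ofNat, smul_eq_mul, div_eq_mul_inv]
      ring
    · simp [mul_pow, div_eq_inv_mul]
  refine HasGradientAt.gradient (hasGradientAt_iff_hasFDerivAt.2 ?_)
  refine ((hψ _).hasDerivAt.comp_hasFDerivAt y h_sq).congr_fderiv ?_
  ext v
  simp only [map_sub, smul_apply, sub_apply, coe_innerSL_apply, smul_eq_mul, map_smul,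
    InnerProductSpace.toDual_apply_apply]
  ring

variable [FiniteDimensional ℝ E]

theorem hasCompactSupport_comp_norm_sub_div_sq (hθ₁ : ∀ s, 1 ≤ s → θ s = 0) (x : E) {t : ℝ}
    (ht : 0 < t) : HasCompactSupport fun y ↦ θ ((‖y - x‖ / t) ^ 2) := by
  refine .intro (isCompact_closedBall x t) fun y hy ↦ hθ₁ _ (one_le_pow₀ ?_)
  rw [one_le_div ht, ← dist_eq_norm]
  exact (not_le.1 hy).le

theorem hasCompactSupport_comp_norm_sq (hθ₁ : ∀ s, 1 ≤ s → θ s = 0) :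
    HasCompactSupport fun z : E ↦ θ (‖z‖ ^ 2) := by
  simpa using hasCompactSupport_comp_norm_sub_div_sq hθ₁ (0 : E) one_pos

variable [MeasurableSpace E] [BorelSpace E]

/-- The mean of `w` about `x` at scale `t`, with the (unnormalised) radial weight
`z ↦ θ (‖z‖ ^ 2)` in the rescaled variable `z`; it only sees the ball of radius `t` if `θ` vanishes
on `[1, ∞)`. The weight is a function of `‖z‖ ^ 2`, so that it inherits the smoothness of `θ` at the
origin. -/
noncomputable def radialMean (θ : ℝ → ℝ) (w : E → F) (x : E) (t : ℝ) : F :=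
  ∫ z, θ (‖z‖ ^ 2) • w (x + t • z)

theorem radialMean_zero [CompleteSpace F] (θ : ℝ → ℝ) (w : E → F) (x : E) :
    radialMean θ w x 0 = (∫ z : E, θ (‖z‖ ^ 2)) • w x := by
  simp [radialMean, integral_smul_const]

theorem tendsto_radialMean_atTop [Nontrivial E] (hθ : Continuous θ)
    (hθ₁ : ∀ s, 1 ≤ s → θ s = 0) (hw : Continuous w) (hlim : Tendsto w (cocompact E) (𝓝 0))
    (x : E) : Tendsto (radialMean θ w x) atTop (𝓝 0) := by
  obtain ⟨B, hB⟩ : ∃ B, ∀ y, ‖w y‖ ≤ B := by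
    have := (ZeroAtInftyContinuousMap.mk ⟨w, hw⟩ hlim).isBounded_range
    simpa [isBounded_iff_forall_norm_le] using this
  have h_along_ray (z : E) (hz : z ≠ 0) : Tendsto (fun t : ℝ ↦ w (x + t • z)) atTop (𝓝 0) :=
    hlim.comp <| (((Homeomorph.addLeft x).isClosedEmbedding.comp
      (isClosedEmbedding_smul_left hz)).tendsto_cocompact).mono_left atTop_le_cocompact
  rw [← integral_zero E F (μ := volume)]
  refine tendsto_integral_filter_of_dominated_convergence (fun z ↦ ‖θ (‖z‖ ^ 2)‖ * B)
    (.of_forall fun t ↦ Continuous.aestronglyMeasurable (by fun_prop))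
    (.of_forall fun t ↦ .of_forall fun z ↦ ?_) ?_ ?_
  · rw [norm_smul]
    gcongr
    exact hB _
  · exact (Continuous.integrable_of_hasCompactSupport (by fun_prop)
      (hasCompactSupport_comp_norm_sq hθ₁)).norm.mul_const B
  · filter_upwards [Measure.ae_ne volume (0 : E)] with z hz
    simpa using (h_along_ray z hz).const_smul (θ (‖z‖ ^ 2))

theorem hasDerivAt_radialMean (hθ : Continuous θ) (hθ₁ : ∀ s, 1 ≤ s → θ s = 0)
    (hw : ContDiff ℝ 1 w) (x : E) (t : ℝ) :
    HasDerivAt (radialMean θ w x) (∫ z, θ (‖z‖ ^ 2) • fderiv ℝ w (x + t • z) z) t := by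
  have hw₀ := hw.continuous
  have := hw.continuous_fderiv one_ne_zero
  have hderiv_cont : Continuous fun p : ℝ × E ↦
      θ (‖p.2‖ ^ 2) • fderiv ℝ w (x + p.1 • p.2) p.2 := by fun_prop
  obtain ⟨B, hB⟩ := ((isCompact_closedBall t 1).prod
    (isCompact_closedBall (0 : E) 1)).exists_bound_of_continuousOn hderiv_cont.continuousOn
  have hchain (z : E) (s : ℝ) : HasDerivAt (fun s ↦ θ (‖z‖ ^ 2) • w (x + s • z))
      (θ (‖z‖ ^ 2) • fderiv ℝ w (x + s • z) z) s := by
    have hline : HasDerivAt (fun s : ℝ ↦ x + s • z) z s := by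
      simpa using ((hasDerivAt_id s).smul_const z).const_add x
    exact (((hw.differentiable one_ne_zero) _).hasFDerivAt.comp_hasDerivAt s hline).const_smul _
  refine (hasDerivAt_integral_of_dominated_loc_of_deriv_le
    (bound := (Metric.closedBall (0 : E) 1).indicator fun _ ↦ B)
    (Metric.closedBall_mem_nhds t one_pos)
    (.of_forall fun s ↦ Continuous.aestronglyMeasurable (by fun_prop)) ?_
    (Continuous.aestronglyMeasurable (by fun_prop)) (.of_forall fun z s hs ↦ ?_) ?_
    (.of_forall fun z s _ ↦ hchain z s)).2
  · exact Continuous.integrable_of_hasCompactSupport (by fun_prop)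
      (hasCompactSupport_comp_norm_sq hθ₁).smul_right
  · by_cases hz : z ∈ Metric.closedBall (0 : E) 1
    · simpa [hz] using hB (s, z) ⟨hs, hz⟩
    · have : 1 ≤ ‖z‖ := by simpa using (not_le.1 (mt mem_closedBall_zero_iff.2 hz)).le
      simp [hz, hθ₁ _ (one_le_pow₀ this)]
  · exact (integrable_indicator_iff measurableSet_closedBall).2
      (integrableOn_const (isCompact_closedBall _ _).measure_lt_top.ne)

theorem integral_comp_add_smul (G : E → F) (x : E) {t : ℝ} (ht : 0 < t) :
    ∫ z, G (x + t • z) = (t ^ finrank ℝ E)⁻¹ • ∫ y, G y := by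
  rw [Measure.integral_comp_smul_of_nonneg volume (fun z ↦ G (x + z)) t (hR := ht.le),
    integral_add_left_eq_self]

-- `deriv ψ (‖z‖ ^ 2) • z` is half the gradient of `ψ (‖z‖ ^ 2)`, so Green's identity applies.
theorem integral_deriv_smul_fderiv_eq (hψ : ContDiff ℝ 1 ψ) (hψ₁ : ∀ s, 1 ≤ s → ψ s = 0)
    (hw : ContDiff ℝ 2 w) (x : E) {t : ℝ} (ht : 0 < t) :
    ∫ z, deriv ψ (‖z‖ ^ 2) • fderiv ℝ w (x + t • z) z =
      -(1 / 2 : ℝ) • ∫ y, (t ^ (1 - finrank ℝ E : ℝ) * ψ ((‖y - x‖ / t) ^ 2)) • Δ w y := by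
  have hφ : ContDiff ℝ 1 fun y : E ↦ ψ ((‖y - x‖ / t) ^ 2) := by
    simp_rw [div_pow]
    exact hψ.comp (((contDiff_id.sub contDiff_const).norm_sq ℝ).div_const _)
  have h_rescale (z : E) : deriv ψ (‖z‖ ^ 2) • fderiv ℝ w (x + t • z) z =
      (t / 2) • fderiv ℝ w (x + t • z) (∇ (fun y ↦ ψ ((‖y - x‖ / t) ^ 2)) (x + t • z)) := by
    rw [gradient_comp_norm_sub_div_sq (hψ.differentiable one_ne_zero), add_sub_cancel_left,
      norm_smul, Real.norm_of_nonneg ht.le, mul_div_cancel_left₀ _ ht.ne']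
    simp only [map_smul, smul_smul]
    congr 1
    field_simp
  simp_rw [h_rescale, mul_smul]
  rw [integral_smul, integral_smul,
    integral_comp_add_smul (fun y ↦ fderiv ℝ w y (∇ (fun y ↦ ψ ((‖y - x‖ / t) ^ 2)) y)) x ht,
    integral_fderiv_gradient_eq_neg_integral_smul_laplacian hφ
      (hasCompactSupport_comp_norm_sub_div_sq hψ₁ x ht) hw,
    Real.rpow_sub ht, Real.rpow_one, Real.rpow_natCast, smul_neg, smul_neg, smul_smul, smul_smul,
    ← neg_smul]
  ring_nf

end RadialMean

section PotentialRepresentation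

variable {E F : Type*} [NormedAddCommGroup E] [InnerProductSpace ℝ E] [FiniteDimensional ℝ E]
  [MeasurableSpace E] [BorelSpace E] [NormedAddCommGroup F] [NormedSpace ℝ F]

/-- The Riesz potential of `f` with kernel `‖y - x‖ ^ p`, without normalising constant. The exponent
`p = 2 - dim E` gives the Newtonian potential, up to a constant factor. -/
noncomputable def rieszPotential (p : ℝ) (f : E → F) (x : E) : F :=
  ∫ y, ‖y - x‖ ^ p • f y

theorem rpow_mul_comp_div_eq (p : ℝ) (g : ℝ → ℝ) {r t : ℝ} (hr : 0 < r) (ht : 0 < t) :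
    t ^ p * g (r / t) = r ^ p * ((r⁻¹ * t) ^ p * g (1 / (r⁻¹ * t))) := by
  rw [Real.mul_rpow (by positivity) ht.le, Real.inv_rpow hr.le]
  field_simp

theorem integral_Ioi_rpow_mul_comp_div (p : ℝ) (g : ℝ → ℝ) {r : ℝ} (hr : 0 < r) :
    ∫ t in Ioi 0, t ^ p * g (r / t) = r ^ (p + 1) * ∫ t in Ioi 0, t ^ p * g (1 / t) := by
  rw [setIntegral_congr_fun measurableSet_Ioi fun t ht ↦ rpow_mul_comp_div_eq p g hr ht,
    integral_const_mul, integral_comp_mul_left_Ioi (fun t ↦ t ^ p * g (1 / t)) 0 (inv_pos.2 hr),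
    mul_zero, inv_inv, smul_eq_mul, Real.rpow_add_one hr.ne', mul_assoc]

theorem integrableOn_Ioi_rpow_mul_comp_div {p : ℝ} (hp : p < -1) {g : ℝ → ℝ} (hg : Continuous g)
    (hg₁ : ∀ s, 1 ≤ s → g s = 0) {r : ℝ} (hr : 0 < r) :
    IntegrableOn (fun t ↦ t ^ p * g (r / t)) (Ioi 0) := by
  obtain ⟨B, hB⟩ := (isCompact_Icc (a := (0 : ℝ)) (b := 1)).exists_bound_of_continuousOn
    hg.continuousOn
  have hzero : IntegrableOn (fun t ↦ t ^ p * g (r / t)) (Ioc 0 r) := by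
    refine (integrableOn_congr_fun (g := 0) (fun t ht ↦ ?_) measurableSet_Ioc).2
      integrableOn_zero
    simp [hg₁ (r / t) ((one_le_div ht.1).2 ht.2)]
  have htail : IntegrableOn (fun t ↦ t ^ p * g (r / t)) (Ioi r) := by
    refine (integrableOn_Ioi_rpow_of_lt hp hr).mul_bdd (c := B) (Measurable.aestronglyMeasurable
      (by fun_prop)) ?_
    refine (ae_restrict_iff' measurableSet_Ioi).2 (.of_forall fun t ht ↦ hB _ ?_)
    have ht₀ : 0 < t := hr.trans ht
    exact ⟨by positivity, (div_le_one ht₀).2 (le_of_lt ht)⟩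
  rw [← Ioc_union_Ioi_eq_Ioi hr.le]
  exact hzero.union htail

variable {f : E → F} {g : ℝ → ℝ} {p : ℝ} {x : E}

theorem integrable_prod_rpow_mul_comp_norm_sub_div [Nontrivial E] (hp : p < -1) (hg : Continuous g)
    (hg₁ : ∀ s, 1 ≤ s → g s = 0) (hf : Continuous f)
    (hint : Integrable fun y ↦ ‖y - x‖ ^ (p + 1) • f y) :
    Integrable (fun q : ℝ × E ↦ (q.1 ^ p * g (‖q.2 - x‖ / q.1)) • f q.2)
      ((volume.restrict (Ioi 0)).prod volume) := by
  have hmeas : AEStronglyMeasurable (fun q : ℝ × E ↦ (q.1 ^ p * g (‖q.2 - x‖ / q.1)) • f q.2)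
      ((volume.restrict (Ioi 0)).prod volume) :=
    (Measurable.aestronglyMeasurable (by fun_prop)).smul
      (Continuous.aestronglyMeasurable (by fun_prop))
  have hnorm {y : E} (hy : y ≠ x) : ∫ t in Ioi 0, ‖(t ^ p * g (‖y - x‖ / t)) • f y‖ =
      (∫ t in Ioi 0, t ^ p * |g (1 / t)|) * ‖‖y - x‖ ^ (p + 1) • f y‖ := by
    have hr : 0 < ‖y - x‖ := norm_sub_pos_iff.2 hy
    rw [norm_smul, Real.norm_of_nonneg (by positivity), ← mul_assoc, mul_comm (∫ _ in _, _),
      ← integral_Ioi_rpow_mul_comp_div p (fun s ↦ |g s|) hr, ← integral_mul_const]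
    refine setIntegral_congr_fun measurableSet_Ioi fun t ht ↦ ?_
    simp only [norm_smul, norm_mul, Real.norm_eq_abs, Real.abs_rpow_of_nonneg (le_of_lt ht),
      abs_of_pos (mem_Ioi.1 ht)]
  refine (integrable_prod_iff' hmeas).2 ⟨?_,
    (hint.norm.const_mul (∫ t in Ioi 0, t ^ p * |g (1 / t)|)).congr ?_⟩
  · filter_upwards [Measure.ae_ne volume x] with y hy
    exact (integrableOn_Ioi_rpow_mul_comp_div hp hg hg₁ (norm_sub_pos_iff.2 hy)).smul_const (f y)
  · filter_upwards [Measure.ae_ne volume x] with y hy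
    exact (hnorm hy).symm

theorem integral_Ioi_integral_rpow_mul_comp_norm_sub_div [Nontrivial E] [CompleteSpace F]
    (hp : p < -1) (hg : Continuous g) (hg₁ : ∀ s, 1 ≤ s → g s = 0) (hf : Continuous f)
    (hint : Integrable fun y ↦ ‖y - x‖ ^ (p + 1) • f y) :
    ∫ t in Ioi 0, ∫ y, (t ^ p * g (‖y - x‖ / t)) • f y =
      (∫ t in Ioi 0, t ^ p * g (1 / t)) • rieszPotential (p + 1) f x := by
  rw [integral_integral_swap (integrable_prod_rpow_mul_comp_norm_sub_div hp hg hg₁ hf hint),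
    rieszPotential, ← integral_smul]
  refine integral_congr_ae ?_
  filter_upwards [Measure.ae_ne volume x] with y hy
  rw [integral_smul_const, integral_Ioi_rpow_mul_comp_div p g (norm_sub_pos_iff.2 hy), smul_smul,
    mul_comm]

variable {w : E → F} {ψ : ℝ → ℝ}

theorem smul_eq_smul_rieszPotential_laplacian [CompleteSpace F] (hE : 3 ≤ finrank ℝ E)
    (hψ : ContDiff ℝ 1 ψ) (hψ₁ : ∀ s, 1 ≤ s → ψ s = 0)
    (hw : ContDiff ℝ 2 w) (hlim : Tendsto w (cocompact E) (𝓝 0))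
    (hint : Integrable fun y ↦ ‖y - x‖ ^ (2 - finrank ℝ E : ℝ) • Δ w y) :
    (∫ z : E, deriv ψ (‖z‖ ^ 2)) • w x =
      (1 / 2 * ∫ t in Ioi 0, t ^ (1 - finrank ℝ E : ℝ) * ψ ((1 / t) ^ 2)) •
        rieszPotential (2 - finrank ℝ E) (Δ w) x := by
  have : Nontrivial E := nontrivial_of_finrank_pos (R := ℝ) (by lia)
  have hp : (1 - finrank ℝ E : ℝ) < -1 := by
    have : (3 : ℝ) ≤ finrank ℝ E := by exact_mod_cast hE
    linarith
  have hp₂ : (2 - finrank ℝ E : ℝ) = 1 - finrank ℝ E + 1 := by ring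
  have hψ' : Continuous (deriv ψ) := hψ.continuous_deriv le_rfl
  have hψ'₁ : ∀ s, 1 ≤ s → deriv ψ s = 0 := fun s ↦
    deriv_eq_zero_of_forall_ge (hψ.differentiable one_ne_zero s) hψ₁
  have hg : Continuous fun s ↦ ψ (s ^ 2) := by
    have := hψ.continuous
    fun_prop
  have hg₁ : ∀ s : ℝ, 1 ≤ s → ψ (s ^ 2) = 0 := fun s hs ↦ hψ₁ _ (one_le_pow₀ hs)
  rw [hp₂] at hint ⊢
  let K (t : ℝ) : F := ∫ y, (t ^ (1 - finrank ℝ E : ℝ) * ψ ((‖y - x‖ / t) ^ 2)) • Δ w y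
  have hK : IntegrableOn K (Ioi 0) := (integrable_prod_rpow_mul_comp_norm_sub_div hp hg hg₁
    (continuous_laplacian hw) hint).integral_prod_left
  have hderiv (t : ℝ) := hasDerivAt_radialMean hψ' hψ'₁ (hw.of_le one_le_two) x t
  have hFTC := integral_Ioi_of_hasDerivAt_of_tendsto (f' := fun t ↦ -(1 / 2 : ℝ) • K t)
    (hderiv 0).continuousAt.continuousWithinAt
    (fun t ht ↦ (hderiv t).congr_deriv (integral_deriv_smul_fderiv_eq hψ hψ₁ hw x ht))
    (hK.smul _) (tendsto_radialMean_atTop hψ' hψ'₁ hw.continuous hlim x)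
  rw [radialMean_zero, zero_sub, integral_smul, neg_smul, neg_inj] at hFTC
  rw [← hFTC, mul_smul, ← integral_Ioi_integral_rpow_mul_comp_norm_sub_div hp hg hg₁
    (continuous_laplacian hw) hint]

theorem exists_contDiff_integral_deriv_norm_sq_ne_zero (E : Type*) [NormedAddCommGroup E]
    [InnerProductSpace ℝ E] [FiniteDimensional ℝ E] [MeasurableSpace E] [BorelSpace E] :
    ∃ ψ : ℝ → ℝ, ContDiff ℝ 1 ψ ∧ (∀ s, 1 ≤ s → ψ s = 0) ∧ ∫ z : E, deriv ψ (‖z‖ ^ 2) ≠ 0 := by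
  let ψ : ℝ → ℝ := fun s ↦ expNegInvGlue (1 - s)
  have hψ : ContDiff ℝ 1 ψ := expNegInvGlue.contDiff.comp (contDiff_const.sub contDiff_id)
  have hψ₁ : ∀ s, 1 ≤ s → ψ s = 0 := fun s hs ↦ expNegInvGlue.zero_of_nonpos (sub_nonpos.2 hs)
  have := hψ.continuous_deriv le_rfl
  have hψ'₁ : ∀ s, 1 ≤ s → deriv ψ s = 0 := fun s ↦
    deriv_eq_zero_of_forall_ge (hψ.differentiable one_ne_zero s) hψ₁
  have hanti : Antitone ψ := fun s t hst ↦ expNegInvGlue.monotone (sub_le_sub_left hst 1)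
  have hψ'₀ : deriv ψ 0 = -expNegInvGlue 1 := by
    have h := expNegInvGlue.hasDerivAt_polynomial_eval_inv_mul 1 (1 - 0)
    simp only [Polynomial.eval_one, one_mul] at h
    rw [(h.comp_const_sub 1 0).deriv]
    simp
  refine ⟨ψ, hψ, hψ₁, ?_⟩
  rw [← neg_ne_zero, ← integral_neg]
  refine (Continuous.integral_pos_of_hasCompactSupport_nonneg_nonzero (x := (0 : E))
    (f := fun z ↦ -deriv ψ (‖z‖ ^ 2)) (by fun_prop) ?_
    (fun z ↦ neg_nonneg.2 hanti.deriv_nonpos) ?_).ne'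
  · exact hasCompactSupport_comp_norm_sq (θ := fun s ↦ -deriv ψ s) fun s hs ↦ by simp [hψ'₁ s hs]
  · simp [hψ'₀, (expNegInvGlue.pos_of_pos one_pos).ne']

theorem exists_eq_smul_rieszPotential_laplacian (F : Type*) [NormedAddCommGroup F]
    [NormedSpace ℝ F] [CompleteSpace F] (hE : 3 ≤ finrank ℝ E) :
    ∃ c : ℝ, ∀ w : E → F, ContDiff ℝ 2 w → Tendsto w (cocompact E) (𝓝 0) → ∀ x,
      Integrable (fun y ↦ ‖y - x‖ ^ (2 - finrank ℝ E : ℝ) • Δ w y) →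
        w x = c • rieszPotential (2 - finrank ℝ E) (Δ w) x := by
  obtain ⟨ψ, hψ, hψ₁, hκ⟩ := exists_contDiff_integral_deriv_norm_sq_ne_zero E
  refine ⟨(∫ z : E, deriv ψ (‖z‖ ^ 2))⁻¹ *
    (1 / 2 * ∫ t in Ioi 0, t ^ (1 - finrank ℝ E : ℝ) * ψ ((1 / t) ^ 2)),
    fun w hw hlim x hint ↦ ?_⟩
  rw [mul_smul, eq_inv_smul_iff₀ hκ, smul_eq_smul_rieszPotential_laplacian hE hψ hψ₁ hw hlim hint]

end PotentialRepresentation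

section Cocompact

variable {X : Type*} [TopologicalSpace X]

theorem eventually_eventually_nhds_of_cocompact [R1Space X] {p : X → Prop}
    (hp : ∀ᶠ x in cocompact X, p x) : ∀ᶠ x in cocompact X, ∀ᶠ y in 𝓝 x, p y := by
  rw [← coclosedCompact_eq_cocompact] at hp ⊢
  obtain ⟨K, ⟨hKclosed, hK⟩, hKp⟩ := hasBasis_coclosedCompact.eventually_iff.1 hp
  filter_upwards [hK.compl_mem_coclosedCompact_of_isClosed hKclosed] with x hx
  exact eventually_of_mem (hKclosed.isOpen_compl.mem_nhds hx) fun y hy ↦ hKp hy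

theorem isBigO_principal_of_isBigO_cocompact {F G : Type*} [SeminormedAddCommGroup F]
    [NormedAddCommGroup G] {f : X → F} {g : X → G} {S : Set X} (hS : IsClosed S)
    (hf : ContinuousOn f S) (hg : ContinuousOn g S) (hg₀ : ∀ x ∈ S, g x ≠ 0)
    (hfg : f =O[cocompact X] g) :
    f =O[𝓟 S] g := by
  obtain ⟨c, hc⟩ := hfg.bound
  obtain ⟨K, hK, hKc⟩ := mem_cocompact.1 hc
  have hfar : f =O[𝓟 Kᶜ] g := .of_bound c (mem_principal.2 hKc)
  have hKS : IsCompact (K ∩ S) := hK.inter_right hS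
  have hnear : f =O[𝓟 (K ∩ S)] g :=
    ((hf.mono inter_subset_right).isBigO_principal hKS (c := (1 : ℝ)) (by simp)).trans
      ((hg.mono inter_subset_right).isBigO_rev_principal hKS (fun x hx ↦ hg₀ x hx.2) (1 : ℝ))
  refine (hfar.sup hnear).mono ?_
  rw [sup_principal, principal_mono]
  intro x hx
  by_cases hxK : x ∈ K <;> simp [hx, hxK]

theorem tendsto_cocompact_nhds_zero_iff {E F : Type*} [SeminormedAddCommGroup E] [ProperSpace E]
    [SeminormedAddCommGroup F] {f : E → F} : Tendsto f (cocompact E) (𝓝 0) ↔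
      ∀ ε, 0 < ε → ∃ R, ∀ x, R ≤ ‖x‖ → ‖f x‖ ≤ ε := by
  rw [← Metric.cobounded_eq_cocompact,
    hasBasis_cobounded_norm.tendsto_iff Metric.nhds_basis_closedBall]
  simp

theorem exists_contDiff_eventuallyEq_cocompact {E F : Type*} [NormedAddCommGroup E]
    [NormedSpace ℝ E] [FiniteDimensional ℝ E] [NormedAddCommGroup F] [NormedSpace ℝ F]
    {u : E → F} {k : ℕ∞} (hu : ∀ᶠ x in cocompact E, ContDiffAt ℝ k u x) :
    ∃ w : E → F, ContDiff ℝ k w ∧ w =ᶠ[cocompact E] u := by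
  obtain ⟨R, -, hR⟩ := (Metric.cobounded_eq_cocompact (α := E) ▸
    hasBasis_cobounded_norm (E := E)).mem_iff.1 hu
  let χ : ContDiffBump (0 : E) := ⟨max R 0 + 1, max R 0 + 2, by positivity, by linarith⟩
  refine ⟨fun x ↦ (1 - χ x) • u x, contDiff_iff_contDiffAt.2 fun x ↦ ?_, ?_⟩
  · rcases lt_or_ge ‖x‖ (max R 0 + 1) with hx | hx
    · refine (contDiffAt_const (c := (0 : F))).congr_of_eventuallyEq ?_
      filter_upwards [χ.eventuallyEq_one_of_mem_ball (mem_ball_zero_iff.2 hx)] with y hy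
      simp [hy]
    · refine (contDiffAt_const.sub χ.contDiffAt).smul (hR ?_)
      exact (le_max_left R 0).trans (by linarith)
  · filter_upwards [(tendsto_norm_cocompact_atTop (E := E)).eventually_ge_atTop χ.rOut] with x hx
    simp [χ.zero_of_le_dist (by simpa using hx)]

end Cocompact

section FarField

theorem abs_rpow_sub_rpow_le {p m a b : ℝ} (hp : p ≤ 1) (hm : 0 < m) (ha : m ≤ a) (hb : m ≤ b) :
    |a ^ p - b ^ p| ≤ |p| * m ^ (p - 1) * |a - b| := by
  refine (convex_Ici m).norm_image_sub_le_of_norm_deriv_le (f := fun r : ℝ ↦ r ^ p)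
    (fun r hr ↦ ?_) (fun r hr ↦ ?_) hb ha
  · exact Real.differentiableAt_rpow_const_of_ne p (hm.trans_le hr).ne'
  · have hr₀ : 0 < r := hm.trans_le hr
    rw [Real.deriv_rpow_const, norm_mul, Real.norm_eq_abs, Real.norm_of_nonneg (by positivity)]
    gcongr |p| * ?_
    exact Real.rpow_le_rpow_of_nonpos hm hr (by linarith)

theorem abs_rpow_norm_sub_sub_rpow_norm_le {E : Type*} [SeminormedAddCommGroup E] {p : ℝ}
    (hp : p ≤ 1) {x y : E} (hx : 0 < ‖x‖) (hxy : 2 * ‖y‖ ≤ ‖x‖) :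
    |‖y - x‖ ^ p - ‖x‖ ^ p| ≤ |p| * (‖x‖ / 2) ^ (p - 1) * ‖y‖ := by
  have hle : ‖x‖ / 2 ≤ ‖y - x‖ := by linarith [norm_sub_norm_le x y, norm_sub_rev x y]
  refine (abs_rpow_sub_rpow_le hp (half_pos hx) hle (half_le_self hx.le)).trans ?_
  gcongr
  simpa using abs_norm_sub_norm_le (y - x) (-x)

variable {E F : Type*} [NormedAddCommGroup E] [InnerProductSpace ℝ E] [MeasurableSpace E]
  [BorelSpace E] [FiniteDimensional ℝ E] [NormedAddCommGroup F] [NormedSpace ℝ F]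

theorem integrable_rpow_norm_sub_smul (p : ℝ) {f : E → F} (hf : Continuous f)
    (hfc : HasCompactSupport f) {x : E} (hx : x ∉ tsupport f) :
    Integrable fun y ↦ ‖y - x‖ ^ p • f y := by
  refine (continuous_of_tsupport fun y hy ↦ ?_).integrable_of_hasCompactSupport hfc.smul_left
  have hyx : y ≠ x := fun h ↦ hx (h ▸ tsupport_smul_subset_right _ f hy)
  exact ((by fun_prop : Continuous fun z ↦ ‖z - x‖).continuousAt.rpow_const
    (.inl (norm_sub_pos_iff.2 hyx).ne')).smul hf.continuousAt

theorem isBigO_rieszPotential_sub_rpow_norm_smul {p : ℝ} (hp : p ≤ 1) {f : E → F}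
    (hf : Continuous f) (hfc : HasCompactSupport f) :
    (fun x ↦ rieszPotential p f x - ‖x‖ ^ p • ∫ y, f y) =O[cocompact E]
      fun x ↦ ‖x‖ ^ (p - 1) := by
  obtain ⟨R, hR⟩ := hfc.isCompact.isBounded.exists_norm_le
  have hmass : Integrable fun y ↦ ‖y‖ * ‖f y‖ :=
    (continuous_norm.mul hf.norm).integrable_of_hasCompactSupport hfc.norm.mul_left
  refine .of_bound (|p| * 2⁻¹ ^ (p - 1) * ∫ y, ‖y‖ * ‖f y‖) ?_
  filter_upwards [tendsto_norm_cocompact_atTop.eventually_gt_atTop 0,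
    tendsto_norm_cocompact_atTop.eventually_ge_atTop (2 * R),
    hfc.isCompact.compl_mem_cocompact] with x hx hxR hxf
  have hpointwise (y : E) : ‖(‖y - x‖ ^ p - ‖x‖ ^ p) • f y‖ ≤
      |p| * (‖x‖ / 2) ^ (p - 1) * (‖y‖ * ‖f y‖) := by
    rcases eq_or_ne (f y) 0 with hy | hy
    · simp [hy]
    · have hyR : ‖y‖ ≤ R := hR y (subset_tsupport f hy)
      rw [norm_smul, ← mul_assoc]
      gcongr
      exact abs_rpow_norm_sub_sub_rpow_norm_le hp hx (by linarith)
  calc ‖rieszPotential p f x - ‖x‖ ^ p • ∫ y, f y‖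
      = ‖∫ y, (‖y - x‖ ^ p - ‖x‖ ^ p) • f y‖ := by
        simp_rw [sub_smul]
        rw [rieszPotential, ← integral_smul,
          integral_sub (integrable_rpow_norm_sub_smul p hf hfc hxf)
          ((hf.integrable_of_hasCompactSupport hfc).fun_smul _)]
    _ ≤ ∫ y, |p| * (‖x‖ / 2) ^ (p - 1) * (‖y‖ * ‖f y‖) :=
        norm_integral_le_of_norm_le (hmass.const_mul _) (.of_forall hpointwise)
    _ = |p| * 2⁻¹ ^ (p - 1) * (∫ y, ‖y‖ * ‖f y‖) * ‖‖x‖ ^ (p - 1)‖ := by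
        rw [integral_const_mul, div_eq_mul_inv, Real.mul_rpow hx.le (by norm_num),
          Real.norm_of_nonneg (by positivity)]
        ring

end FarField

section Expansion

open InnerProductSpace

variable {E F : Type*} [NormedAddCommGroup E] [InnerProductSpace ℝ E] [FiniteDimensional ℝ E]
  [NormedAddCommGroup F] [NormedSpace ℝ F] {u : E → F}

theorem hasCompactSupport_laplacian_of_eventuallyEq {w : E → F}
    (hu : ∀ᶠ x in cocompact E, HarmonicAt u x) (hwu : w =ᶠ[cocompact E] u) :
    HasCompactSupport (Δ w) := by
  rw [hasCompactSupport_iff_eventuallyEq, coclosedCompact_eq_cocompact]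
  filter_upwards [eventually_eventually_nhds_of_cocompact hwu, hu] with x hwux hux
  rw [(laplacian_congr_nhds hwux).eq_of_nhds, hux.2.eq_of_nhds]

variable [CompleteSpace F]

theorem exists_isBigO_sub_rpow_norm_smul_of_harmonicAt (hE : 3 ≤ finrank ℝ E)
    (hu : ∀ᶠ x in cocompact E, HarmonicAt u x) (hlim : Tendsto u (cocompact E) (𝓝 0)) :
    ∃ A : F, (fun x ↦ u x - ‖x‖ ^ (2 - finrank ℝ E : ℝ) • A) =O[cocompact E]
      fun x ↦ ‖x‖ ^ (1 - finrank ℝ E : ℝ) := by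
  borelize E
  have hd : (3 : ℝ) ≤ finrank ℝ E := by exact_mod_cast hE
  obtain ⟨w, hw, hwu⟩ := exists_contDiff_eventuallyEq_cocompact (k := 2) (hu.mono fun _ h ↦ h.1)
  have hΔ : Continuous (Δ w) := continuous_laplacian hw
  have hΔc := hasCompactSupport_laplacian_of_eventuallyEq hu hwu
  obtain ⟨c, hc⟩ := exists_eq_smul_rieszPotential_laplacian (E := E) F hE
  have hfar := isBigO_rieszPotential_sub_rpow_norm_smul (p := 2 - finrank ℝ E) (by linarith) hΔ hΔc
  refine ⟨c • ∫ y, Δ w y, (hfar.const_smul_left c).congr' ?_ (.of_forall fun x ↦ ?_)⟩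
  · filter_upwards [hwu, hΔc.isCompact.compl_mem_cocompact] with x hwux hx
    rw [← hwux, hc w hw (hlim.congr' hwu.symm) x (integrable_rpow_norm_sub_smul _ hΔ hΔc hx),
      Pi.smul_apply, smul_sub, smul_comm c]
  · ring_nf

theorem harmonic_expansion_at_infinity_general (hE : 3 ≤ finrank ℝ E) {r : ℝ} (hr : 0 < r)
    (hu : HarmonicOnNhd u {x | r ≤ ‖x‖}) (hlim : Tendsto u (cocompact E) (𝓝 0)) :
    ∃ (A : F) (C : ℝ), 0 < C ∧ ∀ x, r ≤ ‖x‖ →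
      ‖u x - ‖x‖ ^ (2 - finrank ℝ E : ℝ) • A‖ ≤ C * ‖x‖ ^ (1 - finrank ℝ E : ℝ) := by
  obtain ⟨A, hA⟩ := exists_isBigO_sub_rpow_norm_smul_of_harmonicAt hE
    ((tendsto_norm_cocompact_atTop.eventually_ge_atTop r).mono hu) hlim
  have hrpow (p : ℝ) : ContinuousOn (fun x : E ↦ ‖x‖ ^ p) {x | r ≤ ‖x‖} :=
    continuous_norm.continuousOn.rpow_const fun x hx ↦ .inl (hr.trans_le hx).ne'
  have hbound := isBigO_principal_of_isBigO_cocompact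
    (isClosed_le continuous_const continuous_norm)
    (hu.continuousOn.sub ((hrpow _).smul continuousOn_const)) (hrpow _)
    (fun x hx ↦ (Real.rpow_pos_of_pos (hr.trans_le hx) _).ne') hA
  obtain ⟨C, hC, hbound⟩ := hbound.exists_pos
  refine ⟨A, C, hC, fun x hx ↦ (isBigOWith_principal.1 hbound x hx).trans_eq ?_⟩
  rw [Real.norm_of_nonneg (by positivity)]

end Expansion

/-- For `n ≥ 3`, a bounded harmonic function `u` on the exterior domain
`{|x| > 1}` with `u(x) → 0` as `|x| → ∞` admits the expansion
`|u(x) - A·|x|^{2-n}| ≤ C·|x|^{1-n}` for `|x| ≥ 2`, for some constants `A ∈ ℝ`, `C > 0`. -/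
theorem harmonic_expansion_at_infinity {n : ℕ} (hn : 3 ≤ n)
    {u : EuclideanSpace ℝ (Fin n) → ℝ}
    (hu : ContDiffOn ℝ 2 u {x : EuclideanSpace ℝ (Fin n) | 1 < ‖x‖})
    (hharm : ∀ x : EuclideanSpace ℝ (Fin n), 1 < ‖x‖ → euclideanLaplacian u x = 0)
    (hbdd : ∃ B : ℝ, ∀ x : EuclideanSpace ℝ (Fin n), 1 < ‖x‖ → |u x| ≤ B)
    (hlim : ∀ ε : ℝ, 0 < ε → ∃ R : ℝ,
      ∀ x : EuclideanSpace ℝ (Fin n), R ≤ ‖x‖ → |u x| ≤ ε) :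
    ∃ (A C : ℝ), 0 < C ∧ ∀ x : EuclideanSpace ℝ (Fin n), 2 ≤ ‖x‖ →
      |u x - A * ‖x‖ ^ ((2 : ℝ) - n)| ≤ C * ‖x‖ ^ ((1 : ℝ) - n) := by
  have hu' := harmonicOnNhd_of_euclideanLaplacian_eq_zero
    (isOpen_lt continuous_const continuous_norm) hu hharm
  simpa [mul_comm] using harmonic_expansion_at_infinity_general (by simpa using hn) two_pos
    (hu'.mono fun x (hx : 2 ≤ ‖x‖) ↦ one_lt_two.trans_le hx)
    (tendsto_cocompact_nhds_zero_iff.2 hlim)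
end
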